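/- Let G₂₂ be the simple graph on vertex set {1,…,22} whose edge set is exactly {1,4},{1,7},{1,9},{2,4},{2,7},{2,8},{3,4},{3,5},{3,6},{5,7},{5,9},{5,11},{6,7},{6,8},{6,10},{8,9},{8,11},{9,10},{10,12},{10,13},{11,12},{11,13},{12,15},{12,17},{13,14},{13,16},{14,15},{14,20},{14,22},{15,16},{15,19},{16,17},{16,18},{17,20},{17,22},{18,20},{18,21},{19,20},{19,21},{21,22}. Then G₂₂ is triangle-free, has maximum degree 4, and has chromatic number 4. -/

import Mathlib

/-- The edge list of the graph `G₂₂` on vertex set `{1, …, 22}`. -/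
def edges22 : List (ℕ × ℕ) :=
  [(1,4),(1,7),(1,9),
   (2,4),(2,7),(2,8),
   (3,4),(3,5),(3,6),
   (5,7),(5,9),(5,11),
   (6,7),(6,8),(6,10),
   (8,9),(8,11),
   (9,10),
   (10,12),(10,13),
   (11,12),(11,13),
   (12,15),(12,17),
   (13,14),(13,16),
   (14,15),(14,20),(14,22),
   (15,16),(15,19),
   (16,17),(16,18),
   (17,20),(17,22),
   (18,20),(18,21),
   (19,20),(19,21),
   (21,22)]

/-- The simple graph `G₂₂` on vertex set `{1, …, 22}` (modeled as `Fin 22`, with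
vertex `i : Fin 22` representing the label `i + 1`) whose edges are exactly those
listed in `edges22`. -/
def G22 : SimpleGraph (Fin 22) :=
  SimpleGraph.fromRel (fun u v => ((u.val + 1, v.val + 1) ∈ edges22))

/-!
Label the vertices `1, …, 22`. The vertices `1, …, 11` and `12, …, 22` induce two copies of one
graph, with terminals `10, 11` and `12, 13`, and the only further edges form a complete bipartite
graph between the two pairs of terminals. If a 3-coloring of the first half gave its terminals
equal colors, then, up to permuting the colors, every other vertex except `4` would have a forced
color, and the neighbors `1, 2, 3` of `4` would use all three colors. So every 3-coloring
separates the two terminals of each half, and a 3-coloring of `G₂₂` would give the four terminals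
pairwise distinct colors.
-/

section Separates

variable {V W α : Type*} {G : SimpleGraph V} {H : SimpleGraph W} {u v : V}

/-- The vertices `u` and `v` are separated by `α`-colorings of `G`: every proper coloring of `G`
with colors in `α` gives them different colors. This extends adjacency by the inequalities that
gadgets force. -/
def Separates (G : SimpleGraph V) (α : Type*) (u v : V) : Prop :=
  ∀ C : G.Coloring α, C u ≠ C v

theorem Separates.symm (h : Separates G α u v) : Separates G α v u :=
  fun C => (h C).symm

instance : Std.Symm (Separates G α) :=
  ⟨fun _ _ => Separates.symm⟩

theorem separates_of_adj (h : G.Adj u v) : Separates G α u v :=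
  fun C => C.valid h

theorem Separates.map (h : Separates G α u v) (f : G →g H) : Separates H α (f u) (f v) :=
  fun C => h (C.comp f)

theorem isEmpty_coloring_of_pairwise_separates [Fintype α] {s : Finset V}
    (hs : (s : Set V).Pairwise (Separates G α)) (hcard : Fintype.card α < s.card) :
    IsEmpty (G.Coloring α) := by
  refine ⟨fun C => ?_⟩
  have hinj : Set.InjOn C s := fun u hu v hv huv => by_contra fun hne => hs hu hv hne C huv
  exact hcard.not_ge (Finset.card_le_card_of_injOn C (fun _ _ => Finset.mem_univ _) hinj)

end Separates

theorem ncard_neighborSet_eq_degree {V : Type*} (G : SimpleGraph V) (v : V)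
    [Fintype (G.neighborSet v)] : (G.neighborSet v).ncard = G.degree v := by
  rw [Set.ncard_eq_toFinset_card', Set.toFinset_card, G.card_neighborSet_eq_degree]

theorem eq_of_ne_of_ne_of_card_le_three {α : Type*} [Fintype α] (hα : Fintype.card α ≤ 3)
    {x y a b : α} (hxy : x ≠ y) (hax : a ≠ x) (hay : a ≠ y) (hbx : b ≠ x) (hby : b ≠ y) :
    a = b := by
  classical
  by_contra hab
  have hcard : ({a, b, x, y} : Finset α).card = 4 := by simp [*]
  have hle : 4 ≤ Fintype.card α := hcard ▸ Finset.card_le_univ _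
  lia

instance : DecidableRel G22.Adj :=
  inferInstanceAs (DecidableRel (SimpleGraph.fromRel _).Adj)

/-- The half of `G₂₂` induced on the labels `1, …, 11`. Its terminals, the vertices joined to the
other half, have labels `10` and `11`, that is, they are `9` and `10` in `Fin 11`. -/
def terminalGadget : SimpleGraph (Fin 11) :=
  G22.comap (Fin.castLE (by decide))

instance : DecidableRel terminalGadget.Adj :=
  inferInstanceAs (DecidableRel (G22.comap _).Adj)

theorem terminalGadget_separates {α : Type*} [Fintype α] (hα : Fintype.card α ≤ 3) :
    Separates terminalGadget α 9 10 := by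
  intro C heq
  have adj (u v : Fin 11) (h : terminalGadget.Adj u v := by decide) : C u ≠ C v := C.valid h
  obtain ⟨x, hx⟩ : ∃ x, C 8 = x := ⟨_, rfl⟩
  obtain ⟨y, hy⟩ : ∃ y, C 7 = y := ⟨_, rfl⟩
  obtain ⟨z, hz⟩ : ∃ z, C 9 = z := ⟨_, rfl⟩
  have hz' : C 10 = z := heq.symm.trans hz
  have hxy : x ≠ y := hx ▸ hy ▸ adj 8 7
  have hxz : x ≠ z := hx ▸ hz ▸ adj 8 9
  have hyz : y ≠ z := hy ▸ hz' ▸ adj 7 10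
  have eq_x {a : α} (hay : a ≠ y) (haz : a ≠ z) : a = x :=
    eq_of_ne_of_ne_of_card_le_three hα hyz hay haz hxy hxz
  have eq_y {a : α} (hax : a ≠ x) (haz : a ≠ z) : a = y :=
    eq_of_ne_of_ne_of_card_le_three hα hxz hax haz hxy.symm hyz
  have eq_z {a : α} (hax : a ≠ x) (hay : a ≠ y) : a = z :=
    eq_of_ne_of_ne_of_card_le_three hα hxy hax hay hxz.symm hyz.symm
  have h₄ : C 4 = y := eq_y (hx ▸ adj 4 8) (hz' ▸ adj 4 10)
  have h₅ : C 5 = x := eq_x (hy ▸ adj 5 7) (hz ▸ adj 5 9)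
  have h₆ : C 6 = z := eq_z (h₅ ▸ adj 6 5) (h₄ ▸ adj 6 4)
  have h₀ : C 0 = y := eq_y (hx ▸ adj 0 8) (h₆ ▸ adj 0 6)
  have h₁ : C 1 = x := eq_x (hy ▸ adj 1 7) (h₆ ▸ adj 1 6)
  have h₂ : C 2 = z := eq_z (h₅ ▸ adj 2 5) (h₄ ▸ adj 2 4)
  have h₃ : C 3 = z := eq_z (h₁ ▸ adj 3 1) (h₀ ▸ adj 3 0)
  exact absurd (h₃.trans h₂.symm) (adj 3 2)

/-- The inclusion of the half with labels `1, …, 11`. -/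
def lowerHalf : terminalGadget →g G22 :=
  SimpleGraph.Hom.comap _ G22

/-- The copy of the gadget on the labels `12, …, 22`, with terminals `12` and `13`. -/
def upperHalf : terminalGadget →g G22 where
  toFun := ![18, 17, 21, 20, 13, 16, 19, 15, 14, 11, 12]
  map_rel' {u v} := by revert u v; decide

theorem pairwise_separates_terminals {α : Type*} [Fintype α] (hα : Fintype.card α ≤ 3) :
    (({9, 10, 11, 12} : Finset (Fin 22)) : Set (Fin 22)).Pairwise (Separates G22 α) := by
  have hlower : Separates G22 α 9 10 := (terminalGadget_separates hα).map lowerHalf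
  have hupper : Separates G22 α 11 12 := (terminalGadget_separates hα).map upperHalf
  have hcross {u v : Fin 22} (hu : u ∈ ({9, 10} : Finset _)) (hv : v ∈ ({11, 12} : Finset _)) :
      Separates G22 α u v :=
    separates_of_adj (by revert u v; decide)
  simp [Set.pairwise_insert_of_symm, hlower, hupper, hcross]

theorem not_colorable_three_G22 : ¬ G22.Colorable 3 :=
  not_nonempty_iff.mpr <|
    isEmpty_coloring_of_pairwise_separates (pairwise_separates_terminals (by simp)) (by simp)

/-- A proper 4-coloring of `G₂₂` that uses the fourth color only at the vertex labelled `4`, where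
the forced 3-coloring of a half with equally colored terminals breaks down. -/
def fourColoring : G22.Coloring (Fin 4) :=
  SimpleGraph.Coloring.mk ![2, 1, 0, 3, 2, 1, 0, 2, 1, 0, 0, 1, 2, 0, 2, 1, 0, 0, 1, 2, 2, 1]
    (by intro u v; revert u v; decide)

theorem cliqueFree_three_G22 : G22.CliqueFree 3 := by
  have htriangle : ∀ u v, G22.Adj u v → ∀ w, G22.Adj u w → ¬ G22.Adj v w := by decide
  intro s hs
  obtain ⟨u, v, w, huv, huw, hvw, -⟩ := SimpleGraph.is3Clique_iff.mp hs
  exact htriangle u v huv w huw hvw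

theorem maxDegree_G22 : G22.maxDegree = 4 := by
  decide

/-- `G₂₂` is triangle-free, has maximum degree 4 (every vertex has at most 4 neighbors
and some vertex has exactly 4 neighbors), and has chromatic number 4. -/
theorem stmt_16 :
    G22.CliqueFree 3 ∧
    (∀ v, (G22.neighborSet v).ncard ≤ 4) ∧ (∃ v, (G22.neighborSet v).ncard = 4) ∧
    G22.chromaticNumber = 4 := by
  refine ⟨cliqueFree_three_G22, fun v => ?_, ?_, ?_⟩
  · rw [ncard_neighborSet_eq_degree, ← maxDegree_G22]
    exact G22.degree_le_maxDegree v
  · obtain ⟨v, hv⟩ := G22.exists_maximal_degree_vertex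
    exact ⟨v, by rw [ncard_neighborSet_eq_degree, ← hv, maxDegree_G22]⟩
  · exact SimpleGraph.chromaticNumber_eq_iff_colorable_not_colorable.mpr
      ⟨⟨fourColoring⟩, not_colorable_three_G22⟩
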